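/- Let q ≥ 4, let B be a Baer subplane of PG(2,q²) tangent to ℓ∞ at the point T̄ = B ∩ ℓ∞, and let C be an F_q-conic contained in B with T̄ ∈ C. Then C is contained in exactly one ℓ∞-Baer pencil 𝒦, and the vertex of 𝒦 is a point of C⁺ ∩ ℓ∞ (where C⁺ is the unique F_{q²}-conic containing C). -/

import Mathlib

open scoped Classical
open Matrix

noncomputable section

namespace BaerConics

/-- Points of the projective space `PG(n-1, K)` as projectivization of `Fin n → K`. -/
abbrev PP (K : Type) [Field K] (n : ℕ) : Type := Projectivization K (Fin n → K)

variable {K : Type} [Field K] {m n : ℕ}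

/-- The (at most one) projective point determined by a vector:  empty if `v = 0`,
and the singleton `{[v]}` otherwise. -/
def projPt (v : Fin n → K) : Set (PP K n) :=
  {p | ∃ h : v ≠ 0, p = Projectivization.mk K v h}

/-- The set of projective points lying in a linear subspace. -/
def ptsOf (W : Submodule K (Fin n → K)) : Set (PP K n) :=
  {p | p.rep ∈ W}

/-- The projective line through two points (as the set of points of the span). -/
def lineTh (P Q : PP K n) : Set (PP K n) :=
  ptsOf (Submodule.span K {P.rep, Q.rep})

/-- `X` is a projective flat of projective dimension `d`. -/
def IsFlat (d : ℕ) (X : Set (PP K n)) : Prop :=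
  ∃ W : Submodule K (Fin n → K), Module.finrank K W = d + 1 ∧ X = ptsOf W

/-- Image of a set of vectors under the projective map induced by a matrix. -/
def mimg (M : Matrix (Fin m) (Fin n) K) (X : Set (Fin n → K)) : Set (PP K m) :=
  {p | ∃ v ∈ X, p ∈ projPt (M.mulVec v)}

/-- Coordinatewise application of a ring homomorphism to a vector. -/
def mapVec {L : Type} [Field L] (σ : K →+* L) (v : Fin n → K) : Fin n → L :=
  fun i => σ (v i)

lemma mulVec_inj (M : Matrix (Fin n) (Fin n) K) (hM : IsUnit M.det) :
    Function.Injective M.mulVec := by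
  intro a b hab
  have h := congrArg (fun v => M⁻¹.mulVec v) hab
  simpa [Matrix.mulVec_mulVec, Matrix.nonsing_inv_mul M hM] using h

/-- The projective transformation induced by an invertible matrix. -/
def pmap (M : Matrix (Fin n) (Fin n) K) (hM : IsUnit M.det) (p : PP K n) : PP K n :=
  Projectivization.mk K (M.mulVec p.rep) (by
    intro h
    apply p.rep_nonzero
    have h0 : M.mulVec p.rep = M.mulVec 0 := by simpa [Matrix.mulVec_zero] using h
    exact mulVec_inj M hM h0)

/-- The map induced on projective points by the coordinatewise `q`-power map. -/
def frobPt (q : ℕ) (p : PP K n) : PP K n :=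
  Projectivization.mk K (fun i => p.rep i ^ q) (by
    obtain ⟨i, hi⟩ := Function.ne_iff.mp p.rep_nonzero
    intro h
    exact pow_ne_zero q (by simpa using hi) (by simpa using congrFun h i))

/-- The line at infinity `z = 0` of `PG(2, K)`. -/
def linf (K : Type) [Field K] : Set (PP K 3) := {p | p.rep 2 = 0}

/-- Coordinatewise application of the algebra map to a vector. -/
def algVec (F : Type) {K : Type} [Field F] [Field K] [Algebra F K] {n : ℕ}
    (v : Fin n → F) : Fin n → K := fun i => algebraMap F K (v i)

/-- Vectors representing the points of the standard Baer subline of `ℓ∞`. -/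
def sublineVecs (F K : Type) [Field F] [Field K] [Algebra F K] : Set (Fin 3 → K) :=
  {v | ∃ θ : F, v = ![algebraMap F K θ, 1, 0]} ∪ {![1, 0, 0]}

/-- Nonzero vectors representing the points of `ℓ∞`. -/
def linfVecs (K : Type) [Field K] : Set (Fin 3 → K) := {v | v ≠ 0 ∧ v 2 = 0}

/-- Vectors with all coordinates in (the image of) `F`, representing the canonical
Baer subplane. -/
def subplaneVecs (F K : Type) [Field F] [Field K] [Algebra F K] : Set (Fin 3 → K) :=
  {v | ∃ w : Fin 3 → F, w ≠ 0 ∧ v = algVec F w}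

/-- Vectors of the standard conic with parameters in `S`. -/
def conicVecs {K : Type} [Field K] (S : Set K) : Set (Fin 3 → K) :=
  {v | ∃ θ ∈ S, v = ![1, θ, θ ^ 2]} ∪ {![0, 0, 1]}

/-- `b` is a Baer subline of the line `ℓ` of `PG(2,q²)`. -/
def IsBaerSublineOf (F : Type) {K : Type} [Field F] [Field K] [Algebra F K]
    (b ℓ : Set (PP K 3)) : Prop :=
  ∃ M : Matrix (Fin 3) (Fin 3) K, IsUnit M.det ∧
    ℓ = mimg M (linfVecs K) ∧ b = mimg M (sublineVecs F K)

/-- `B` is a Baer subplane of `PG(2,q²)`. -/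
def IsBaerSubplane (F : Type) {K : Type} [Field F] [Field K] [Algebra F K]
    (B : Set (PP K 3)) : Prop :=
  ∃ M : Matrix (Fin 3) (Fin 3) K, IsUnit M.det ∧ B = mimg M (subplaneVecs F K)

/-- `C` is the image under `PGL(3,K)` of the standard conic with parameters in `S`. -/
def IsConicOver {K : Type} [Field K] (S : Set K) (C : Set (PP K 3)) : Prop :=
  ∃ M : Matrix (Fin 3) (Fin 3) K, IsUnit M.det ∧ C = mimg M (conicVecs S)

/-- An `F_q`-conic of `PG(2,q²)`: a nondegenerate conic of a Baer subplane. -/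
def IsFqConic (F : Type) {K : Type} [Field F] [Field K] [Algebra F K]
    (C : Set (PP K 3)) : Prop :=
  IsConicOver (Set.range (algebraMap F K)) C

/-- An `F_{q²}`-conic of `PG(2,q²)`: a nondegenerate conic. -/
def IsFq2Conic {K : Type} [Field K] (C : Set (PP K 3)) : Prop :=
  IsConicOver (Set.univ : Set K) C

/-- `𝒦` is an `ℓ∞`-Baer pencil with vertex `P`. -/
def IsLinfBaerPencil (F : Type) {K : Type} [Field F] [Field K] [Algebra F K]
    (𝒦 : Set (PP K 3)) (P : PP K 3) : Prop :=
  P ∈ linf K ∧ ∃ ℓ b : Set (PP K 3), IsBaerSublineOf F b ℓ ∧ P ∉ ℓ ∧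
    (∃! X, X ∈ b ∩ linf K) ∧ 𝒦 = ⋃ X ∈ b, lineTh P X

/-- `m` is a line of the Baer subplane `B`, with extension (full line) `ℓ`. -/
def IsLineOfExt {K : Type} [Field K] (q : ℕ) (B m ℓ : Set (PP K 3)) : Prop :=
  IsFlat 1 ℓ ∧ m = B ∩ ℓ ∧ m.ncard = q + 1

/-- `m` is a line of the Baer subplane `B`. -/
def IsLineOf {K : Type} [Field K] (q : ℕ) (B m : Set (PP K 3)) : Prop :=
  ∃ ℓ, IsLineOfExt q B m ℓ

/-- `P` and `Q` are conjugate with respect to the Baer subline `b` of `ℓ∞`. -/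
def ConjWrtSubline (F : Type) {K : Type} [Field F] [Field K] [Algebra F K]
    (q : ℕ) (b : Set (PP K 3)) (P Q : PP K 3) : Prop :=
  ∃ (M : Matrix (Fin 3) (Fin 3) K) (hM : IsUnit M.det),
    mimg M (linfVecs K) = linf K ∧ b = mimg M (sublineVecs F K) ∧
    ∃ P₀ : PP K 3, P = pmap M hM P₀ ∧ Q = pmap M hM (frobPt q P₀)

/-- A representative vector for the point `(δ,1,0)` (resp. `(1,0,0)`) of `ℓ∞`. -/
def ptInfVec {K : Type} [Field K] : Option K → Fin 3 → K
  | some δ => ![δ, 1, 0]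
  | none => ![1, 0, 0]

lemma ptInfVec_ne {K : Type} [Field K] (t : Option K) : ptInfVec t ≠ 0 := by
  cases t with
  | none => intro h; have h0 := congrFun h 0; simp [ptInfVec] at h0
  | some δ => intro h; have h0 := congrFun h 1; simp [ptInfVec] at h0

/-- The point of `ℓ∞` with parameter `δ ∈ K ∪ {∞}`. -/
def ptInf {K : Type} [Field K] (t : Option K) : PP K 3 :=
  Projectivization.mk K (ptInfVec t) (ptInfVec_ne t)

/-- The hyperplane at infinity `z = 0` of `PG(4, F)`. -/
def sinf (F : Type) [Field F] : Set (PP F 5) := {p | p.rep 4 = 0}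

/-- Affine coordinates of the Bruck-Bose image of an affine point of `PG(2,q²)`. -/
def bbVec {F K : Type} [Field F] [Field K] (c0 c1 : K → F) (p : PP K 3) : Fin 5 → F :=
  ![c0 (p.rep 0 / p.rep 2), c1 (p.rep 0 / p.rep 2),
    c0 (p.rep 1 / p.rep 2), c1 (p.rep 1 / p.rep 2), 1]

/-- The Bruck-Bose map (meaningful on affine points of `PG(2,q²)`). -/
def bb {F K : Type} [Field F] [Field K] (c0 c1 : K → F) (p : PP K 3) : PP F 5 :=
  Projectivization.mk F (bbVec c0 c1 p) (by
    intro h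
    have h4 := congrFun h 4
    simp [bbVec] at h4)

/-- First spanning vector of the spread line with parameter `δ ∈ K ∪ {∞}`. -/
def spreadV1 {F K : Type} [Field F] [Field K] (c0 c1 : K → F) : Option K → Fin 5 → F
  | some δ => ![c0 δ, c1 δ, 1, 0, 0]
  | none => ![1, 0, 0, 0, 0]

/-- Second spanning vector of the spread line with parameter `δ ∈ K ∪ {∞}`. -/
def spreadV2 {F K : Type} [Field F] [Field K] (c0 c1 : K → F) (t0 t1 : F) :
    Option K → Fin 5 → F
  | some δ => ![t0 * c1 δ, c0 δ + t1 * c1 δ, 0, 1, 0]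
  | none => ![0, 1, 0, 0, 0]

/-- The line of the regular spread `S` with parameter `δ ∈ K ∪ {∞}`. -/
def spreadLine {F K : Type} [Field F] [Field K] (c0 c1 : K → F) (t0 t1 : F)
    (t : Option K) : Set (PP F 5) :=
  ptsOf (Submodule.span F {spreadV1 c0 c1 t, spreadV2 c0 c1 t0 t1 t})

/-- The extension `[T]⋆` of a spread line to `PG(4,q²)`. -/
def extSpreadLine (F : Type) {K : Type} [Field F] [Field K] [Algebra F K]
    (c0 c1 : K → F) (t0 t1 : F) (t : Option K) : Set (PP K 5) :=
  ptsOf (Submodule.span K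
    {algVec F (spreadV1 c0 c1 t), algVec F (spreadV2 c0 c1 t0 t1 t)})

/-- The `K`-extension of an `F`-subspace. -/
def extSub (F : Type) {K : Type} [Field F] [Field K] [Algebra F K] {n : ℕ}
    (W : Submodule F (Fin n → F)) : Submodule K (Fin n → K) :=
  Submodule.span K (algVec F '' (W : Set (Fin n → F)))

def A0v {K : Type} [Field K] (τ : K) (q : ℕ) : Fin 5 → K := ![τ ^ q, -1, 0, 0, 0]
def A1v {K : Type} [Field K] (τ : K) (q : ℕ) : Fin 5 → K := ![0, 0, τ ^ q, -1, 0]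
def B0v {K : Type} [Field K] (τ : K) : Fin 5 → K := ![τ, -1, 0, 0, 0]
def B1v {K : Type} [Field K] (τ : K) : Fin 5 → K := ![0, 0, τ, -1, 0]

/-- The transversal line `g` of the regular spread, in `PG(4,q²)`. -/
def gline {K : Type} [Field K] (τ : K) (q : ℕ) : Set (PP K 5) :=
  ptsOf (Submodule.span K {A0v τ q, A1v τ q})

/-- The conjugate transversal line `g^q` of the regular spread, in `PG(4,q²)`. -/
def gqline {K : Type} [Field K] (τ : K) : Set (PP K 5) :=
  ptsOf (Submodule.span K {B0v τ, B1v τ})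

/-- Representative vector of the point `T = δA₀ + A₁` of `g`. -/
def gptVec {K : Type} [Field K] (τ : K) (q : ℕ) : Option K → Fin 5 → K
  | some δ => δ • A0v τ q + A1v τ q
  | none => A0v τ q

/-- Representative vector of the conjugate point `T^q = δ^q A₀^q + A₁^q` of `g^q`. -/
def gqptVec {K : Type} [Field K] (τ : K) (q : ℕ) : Option K → Fin 5 → K
  | some δ => δ ^ q • B0v τ + B1v τ
  | none => B0v τ

lemma gptVec_ne {K : Type} [Field K] (τ : K) (q : ℕ) (t : Option K) :
    gptVec τ q t ≠ 0 := by
  cases t with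
  | none =>
      intro h
      have := congrFun h 1
      simp [gptVec, A0v] at this
  | some δ =>
      intro h
      have := congrFun h 3
      simp [gptVec, A0v, A1v] at this

lemma gqptVec_ne {K : Type} [Field K] (τ : K) (q : ℕ) (t : Option K) :
    gqptVec τ q t ≠ 0 := by
  cases t with
  | none =>
      intro h
      have := congrFun h 1
      simp [gqptVec, B0v] at this
  | some δ =>
      intro h
      have := congrFun h 3
      simp [gqptVec, B0v, B1v] at this

/-- The point of `g` corresponding to the point of `ℓ∞` with parameter `δ ∈ K ∪ {∞}`. -/
def gpt {K : Type} [Field K] (τ : K) (q : ℕ) (t : Option K) : PP K 5 :=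
  Projectivization.mk K (gptVec τ q t) (gptVec_ne τ q t)

/-- The point of `g^q` conjugate to `gpt τ q t`. -/
def gqpt {K : Type} [Field K] (τ : K) (q : ℕ) (t : Option K) : PP K 5 :=
  Projectivization.mk K (gqptVec τ q t) (gqptVec_ne τ q t)

/-- Evaluation of the quadratic form with matrix `M` at `v`. -/
def qeval {K : Type} [Field K] {n : ℕ} (M : Matrix (Fin n) (Fin n) K) (v : Fin n → K) : K :=
  v ⬝ᵥ M.mulVec v

/-- Vectors of the standard twisted cubic (inside the hyperplane `x₄ = 0`)
with parameters in `S`. -/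
def tcVecs {K : Type} [Field K] (S : Set K) : Set (Fin 5 → K) :=
  {v | ∃ θ ∈ S, v = ![1, θ, θ ^ 2, θ ^ 3, 0]} ∪ {![0, 0, 0, 1, 0]}

/-- Vectors of the standard 4-dimensional normal rational curve with parameters in `S`. -/
def nrcVecs {K : Type} [Field K] (S : Set K) : Set (Fin 5 → K) :=
  {v | ∃ θ ∈ S, v = ![1, θ, θ ^ 2, θ ^ 3, θ ^ 4]} ∪ {![0, 0, 0, 0, 1]}

/-- `R` is a regulus of `Σ∞` in `PG(4,q)`. -/
def IsRegulus {F : Type} [Field F] (q : ℕ) (R : Set (Set (PP F 5))) : Prop :=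
  R.ncard = q + 1 ∧
  (∀ ℓ ∈ R, IsFlat 1 ℓ ∧ ℓ ⊆ sinf F) ∧
  (∀ ℓ ∈ R, ∀ ℓ' ∈ R, ℓ ≠ ℓ' → ℓ ∩ ℓ' = ∅) ∧
  (∀ mℓ : Set (PP F 5), IsFlat 1 mℓ → mℓ ⊆ sinf F →
    (∃ ℓ₁ ∈ R, ∃ ℓ₂ ∈ R, ∃ ℓ₃ ∈ R, ℓ₁ ≠ ℓ₂ ∧ ℓ₁ ≠ ℓ₃ ∧ ℓ₂ ≠ ℓ₃ ∧
      (mℓ ∩ ℓ₁).Nonempty ∧ (mℓ ∩ ℓ₂).Nonempty ∧ (mℓ ∩ ℓ₃).Nonempty) →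
    ∀ ℓ ∈ R, (mℓ ∩ ℓ).Nonempty)


/-!
Since `T̄ ∈ C`, coordinates can be chosen in which `C` is the standard conic
`{(1, θ, θ²) | θ ∈ F} ∪ {(0, 0, 1)}`, `T̄ = (0, 0, 1)` and `ℓ∞` has the equation `y = δx`. The plane
`B` is then the standard Baer subplane, so its tangency to `ℓ∞` says that `δ ∉ F`. The other point
of `C⁺` on `ℓ∞` is `(1, δ, δ²)`, and projecting `C` from it gives an `ℓ∞`-Baer pencil.

Relative to this pencil, any other `ℓ∞`-Baer pencil through `C` is described by scalars `h₀`, `h₁`,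
`h₂` such that `h₀θ + h₁ + h₂ / (θ - δ) ∈ F` for every `θ ∈ F`. Second divided differences turn
the last term into `h₂ / ((a - δ)(b - δ)(c - δ)) ∈ F`, and comparing two of them gives `h₂ = 0`
because `δ ∉ F` and `F` has four elements. Hence the two pencils coincide.

Any `F_{q²}`-conic containing `C` contains `(1, δ, δ²)`: on the points `(1, x, x²)` its equation is
a polynomial in `x` of degree at most 4, whose coefficient of degree 4 vanishes because of
`(0, 0, 1)`, and which has a root at every element of `F`.
-/

section ProjectiveImages

lemma mem_projPt_iff {p : PP K n} {v : Fin n → K} :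
    p ∈ projPt v ↔ ∃ c : K, c ≠ 0 ∧ c • p.rep = v := by
  constructor
  · rintro ⟨hv, rfl⟩
    obtain ⟨a, ha⟩ := Projectivization.exists_smul_eq_mk_rep K v hv
    exact ⟨↑a⁻¹, a⁻¹.ne_zero, by rw [← ha]; exact inv_smul_smul a v⟩
  · rintro ⟨c, hc, rfl⟩
    refine ⟨smul_ne_zero hc p.rep_nonzero, ?_⟩
    rw [← p.mk_rep, Projectivization.mk_eq_mk_iff']
    exact ⟨c⁻¹, by simp [smul_smul, inv_mul_cancel₀ hc]⟩

lemma mem_projPt_rep (p : PP K n) : p ∈ projPt p.rep :=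
  mem_projPt_iff.mpr ⟨1, one_ne_zero, one_smul K _⟩

lemma eq_of_mem_projPt {p r : PP K n} {v : Fin n → K} (hp : p ∈ projPt v) (hr : r ∈ projPt v) :
    p = r :=
  hp.2.trans hr.2.symm

lemma projPt_smul {c : K} (hc : c ≠ 0) (v : Fin n → K) : projPt (c • v) = projPt v := by
  ext p
  simp only [mem_projPt_iff]
  constructor
  · rintro ⟨d, hd, h⟩
    exact ⟨c⁻¹ * d, mul_ne_zero (inv_ne_zero hc) hd, by rw [mul_smul, h, inv_smul_smul₀ hc]⟩
  · rintro ⟨d, hd, rfl⟩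
    exact ⟨c * d, mul_ne_zero hc hd, mul_smul c d _⟩

lemma exists_smul_eq_of_mem_projPt {p : PP K n} {v w : Fin n → K} (hv : p ∈ projPt v)
    (hw : p ∈ projPt w) : ∃ c : K, c ≠ 0 ∧ c • v = w := by
  obtain ⟨a, ha, rfl⟩ := mem_projPt_iff.mp hv
  obtain ⟨b, hb, rfl⟩ := mem_projPt_iff.mp hw
  exact ⟨b * a⁻¹, mul_ne_zero hb (inv_ne_zero ha), by rw [smul_smul, inv_mul_cancel_right₀ ha]⟩

lemma mem_linf_iff {p : PP K 3} {v : Fin 3 → K} (hp : p ∈ projPt v) : p ∈ linf K ↔ v 2 = 0 := by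
  obtain ⟨c, hc, rfl⟩ := mem_projPt_iff.mp hp
  simp [linf, hc]

lemma mulVec_ne_zero {M : Matrix (Fin n) (Fin n) K} (hM : IsUnit M.det) {v : Fin n → K}
    (hv : v ≠ 0) : M *ᵥ v ≠ 0 :=
  fun h => hv (mulVec_inj M hM (h.trans (M.mulVec_zero).symm))

lemma exists_mem_projPt_mulVec {M : Matrix (Fin n) (Fin n) K} (hM : IsUnit M.det) (p : PP K n) :
    ∃ v, p ∈ projPt (M *ᵥ v) :=
  ⟨M⁻¹ *ᵥ p.rep, by
    rw [mulVec_mulVec, mul_nonsing_inv M hM, one_mulVec]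
    exact mem_projPt_rep p⟩

lemma mem_projPt_mulVec_of_eq_smul {M : Matrix (Fin m) (Fin n) K} {v w : Fin n → K} {c : K}
    (h : w = c • v) {p : PP K m} (hp : p ∈ projPt (M *ᵥ w)) : p ∈ projPt (M *ᵥ v) := by
  subst h
  rw [mulVec_smul] at hp
  rwa [projPt_smul (left_ne_zero_of_smul hp.1)] at hp

lemma mimg_smul {c : K} (hc : c ≠ 0) (M : Matrix (Fin m) (Fin n) K) (X : Set (Fin n → K)) :
    mimg (c • M) X = mimg M X := by
  simp only [mimg, smul_mulVec, projPt_smul hc]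

lemma mem_mimg_iff {M : Matrix (Fin n) (Fin n) K} (hM : IsUnit M.det) {X : Set (Fin n → K)}
    (hX : ∀ c : K, c ≠ 0 → ∀ v ∈ X, c • v ∈ X) {p : PP K n} {v : Fin n → K}
    (hp : p ∈ projPt (M *ᵥ v)) : p ∈ mimg M X ↔ v ∈ X := by
  refine ⟨?_, fun hv => ⟨v, hv, hp⟩⟩
  rintro ⟨w, hw, hpw⟩
  obtain ⟨c, hc, h⟩ := exists_smul_eq_of_mem_projPt hpw hp
  rw [← mulVec_smul] at h
  exact mulVec_inj M hM h ▸ hX c hc w hw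

lemma mem_lineTh_iff {P Q p : PP K n} {u v w : Fin n → K} (hP : P ∈ projPt v)
    (hQ : Q ∈ projPt w) (hp : p ∈ projPt u) :
    p ∈ lineTh P Q ↔ ∃ a b : K, a • v + b • w = u := by
  obtain ⟨c, hc, rfl⟩ := mem_projPt_iff.mp hP
  obtain ⟨d, hd, rfl⟩ := mem_projPt_iff.mp hQ
  obtain ⟨e, he, rfl⟩ := mem_projPt_iff.mp hp
  refine Submodule.mem_span_pair.trans ⟨?_, ?_⟩
  · rintro ⟨a, b, h⟩
    refine ⟨e * a * c⁻¹, e * b * d⁻¹, ?_⟩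
    rw [← h, smul_add]
    simp only [smul_smul, inv_mul_cancel_right₀ hc, inv_mul_cancel_right₀ hd]
  · rintro ⟨a, b, h⟩
    refine ⟨e⁻¹ * a * c, e⁻¹ * b * d, ?_⟩
    rw [← inv_smul_smul₀ he p.rep, ← h, smul_add]
    simp only [smul_smul, mul_assoc]

end ProjectiveImages

section Coordinates

variable {F : Type} [Field F] [Algebra F K]

lemma algVec_mulVec (A : Matrix (Fin m) (Fin n) F) (w : Fin n → F) :
    (algVec F (A *ᵥ w) : Fin m → K) = A.map (algebraMap F K) *ᵥ algVec F w :=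
  funext fun i => RingHom.map_mulVec (algebraMap F K) A w i

lemma algVec_smul (c : F) (w : Fin n → F) :
    (algVec F (c • w) : Fin n → K) = algebraMap F K c • algVec F w :=
  funext fun _ => map_mul _ _ _

lemma algVec_eq_zero_iff {w : Fin n → F} : (algVec F w : Fin n → K) = 0 ↔ w = 0 := by
  simp [funext_iff, algVec]

lemma algVec_one : (algVec F 1 : Fin n → K) = 1 :=
  funext fun _ => map_one _

lemma algVec_single (i : Fin n) :
    (algVec F (Pi.single i 1) : Fin n → K) = Pi.single i 1 := by
  ext j
  rcases eq_or_ne j i with rfl | h <;> simp [algVec, *]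

lemma algVec_vec3 (a b c : F) :
    (algVec F ![a, b, c] : Fin 3 → K) = ![algebraMap F K a, algebraMap F K b, algebraMap F K c] :=
  funext fun i => by fin_cases i <;> rfl

variable {M : Matrix (Fin m) (Fin 3) K} {p : PP K m}

lemma mem_mimg_subplaneVecs_iff :
    p ∈ mimg M (subplaneVecs F K) ↔ ∃ w : Fin 3 → F, p ∈ projPt (M *ᵥ algVec F w) := by
  constructor
  · rintro ⟨_, ⟨w, -, rfl⟩, hp⟩
    exact ⟨w, hp⟩
  · rintro ⟨w, hp⟩
    refine ⟨_, ⟨w, ?_, rfl⟩, hp⟩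
    rintro rfl
    exact hp.1 (by rw [algVec_eq_zero_iff.mpr rfl, mulVec_zero])

lemma mem_mimg_sublineVecs_iff :
    p ∈ mimg M (sublineVecs F K) ↔ ∃ a b : F, p ∈ projPt (M *ᵥ algVec F ![a, b, 0]) := by
  simp only [algVec_vec3, map_zero]
  constructor
  · rintro ⟨_, ⟨θ, rfl⟩ | rfl, hp⟩
    · exact ⟨θ, 1, by rwa [map_one]⟩
    · exact ⟨1, 0, by rwa [map_one, map_zero]⟩
  · rintro ⟨a, b, hp⟩
    rcases eq_or_ne b 0 with rfl | hb
    · exact ⟨_, Or.inr rfl, mem_projPt_mulVec_of_eq_smul (c := algebraMap F K a)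
        (by simp [-algebraMap_smul]) hp⟩
    · exact ⟨_, Or.inl ⟨a / b, rfl⟩,
        mem_projPt_mulVec_of_eq_smul (c := algebraMap F K b)
          (by simp [hb, mul_div_cancel₀, -algebraMap_smul]) hp⟩

lemma mem_mimg_conicVecs_iff :
    p ∈ mimg M (conicVecs (Set.range (algebraMap F K))) ↔
      ∃ a b : F, p ∈ projPt (M *ᵥ algVec F ![a ^ 2, a * b, b ^ 2]) := by
  simp only [algVec_vec3, map_mul, map_pow]
  constructor
  · rintro ⟨_, ⟨_, ⟨θ, rfl⟩, rfl⟩ | rfl, hp⟩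
    · exact ⟨1, θ, by simpa only [map_one, one_pow, one_mul] using hp⟩
    · exact ⟨0, 1, by simpa using hp⟩
  · rintro ⟨a, b, hp⟩
    rcases eq_or_ne a 0 with rfl | ha
    · exact ⟨_, Or.inr rfl, mem_projPt_mulVec_of_eq_smul (c := algebraMap F K b ^ 2) (by simp) hp⟩
    · refine ⟨_, Or.inl ⟨_, ⟨b / a, rfl⟩, rfl⟩,
        mem_projPt_mulVec_of_eq_smul (c := algebraMap F K a ^ 2) ?_ hp⟩
      have hb : algebraMap F K b = algebraMap F K a * algebraMap F K (b / a) := by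
        rw [← map_mul, mul_div_cancel₀ _ ha]
      simp only [hb, smul_cons, smul_eq_mul, smul_empty]
      ring_nf

end Coordinates

section Frames

variable {F : Type} [Field F] [Algebra F K]

lemma isUnit_det_map_iff {A : Matrix (Fin n) (Fin n) F} :
    IsUnit (A.map (algebraMap F K)).det ↔ IsUnit A.det := by
  rw [← RingHom.mapMatrix_apply, ← RingHom.map_det, isUnit_map_iff]

lemma exists_isFqConic_frame {C : Set (PP K 3)} (hC : IsFqConic F C) {T : PP K 3} (hT : T ∈ C) :
    ∃ M : Matrix (Fin 3) (Fin 3) K, IsUnit M.det ∧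
      C = mimg M (conicVecs (Set.range (algebraMap F K))) ∧ T ∈ projPt (M *ᵥ ![0, 0, 1]) := by
  obtain ⟨M, hM, rfl⟩ := hC
  obtain ⟨_, ⟨_, ⟨t, rfl⟩, rfl⟩ | rfl, hTM⟩ := hT
  · let S : Matrix (Fin 3) (Fin 3) F := !![0, 0, 1; 0, 1, t; 1, 2 * t, t ^ 2]
    have hS (a b : F) : S *ᵥ ![a ^ 2, a * b, b ^ 2] =
        ![b ^ 2, b * (a + t * b), (a + t * b) ^ 2] := by
      ext i
      fin_cases i <;>
        simp only [S, mulVec, dotProduct, Fin.sum_univ_three, of_apply, cons_val, Fin.zero_eta,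
          Fin.mk_one, Fin.reduceFinMk] <;>
        ring
    have hSdet : IsUnit S.det := by simp [S, det_fin_three]
    refine ⟨M * S.map (algebraMap F K), ?_, ?_, ?_⟩
    · rw [det_mul]
      exact hM.mul (isUnit_det_map_iff.mpr hSdet)
    · ext p
      simp only [mem_mimg_conicVecs_iff, ← mulVec_mulVec, ← algVec_mulVec, hS]
      constructor
      · rintro ⟨a, b, hp⟩
        exact ⟨b - t * a, a, by simpa only [sub_add_cancel] using hp⟩
      · rintro ⟨a, b, hp⟩
        exact ⟨b, a + t * b, hp⟩
    · convert hTM using 2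
      rw [← mulVec_mulVec]
      congr 1
      ext i
      fin_cases i <;> simp [S, mulVec, dotProduct, Fin.sum_univ_three]
  · exact ⟨M, hM, rfl, hTM⟩

/-- The standard projective frame: the coordinate vectors and their sum. Its images determine a
projectivity, so one mapping it into the points with coordinates in `F` is defined over `F`. -/
def stdFrame (F : Type) [Field F] (n : ℕ) : Set (Fin n → F) :=
  insert 1 (Set.range fun i => Pi.single i 1)

lemma exists_eq_smul_mul_map_of_stdFrame {M N : Matrix (Fin n) (Fin n) K} (hM : IsUnit M.det)
    (hN : IsUnit N.det) (h : ∀ v ∈ stdFrame F n, ∃ (c : K) (w : Fin n → F),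
      M *ᵥ algVec F v = c • N *ᵥ algVec F w) :
    ∃ (c : K) (A : Matrix (Fin n) (Fin n) F), M = c • (N * A.map (algebraMap F K)) := by
  choose l w hw using fun i => h (Pi.single i 1) (Or.inr ⟨i, rfl⟩)
  obtain ⟨k, u, hu⟩ := h 1 (Or.inl rfl)
  simp only [algVec_single, algVec_one] at hw hu
  let W : Matrix (Fin n) (Fin n) F := Matrix.of fun j i => w i j
  have hMW : M = N * (W.map (algebraMap F K) * diagonal l) := by
    refine ext_of_mulVec_single fun i => ?_
    rw [hw, ← mulVec_mulVec, ← mulVec_smul]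
    congr 1
    ext j
    simp [W, algVec, mul_comm]
  have hW : IsUnit (W.map (algebraMap F K)).det := by
    rw [hMW, det_mul, det_mul] at hM
    exact isUnit_of_mul_isUnit_left (isUnit_of_mul_isUnit_right hM)
  have hl : l = k • algVec F (W⁻¹ *ᵥ u) := by
    refine mulVec_inj (W.map (algebraMap F K)) hW (mulVec_inj N hN ?_)
    calc N *ᵥ W.map (algebraMap F K) *ᵥ l
        = M *ᵥ 1 := by
          rw [hMW, ← mulVec_mulVec, ← mulVec_mulVec]
          congr 2
          ext i
          simp [mulVec_diagonal]
      _ = N *ᵥ k • algVec F ((W * W⁻¹) *ᵥ u) := by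
          rw [mul_nonsing_inv W (isUnit_det_map_iff.mp hW), one_mulVec, mulVec_smul, hu]
      _ = N *ᵥ W.map (algebraMap F K) *ᵥ k • algVec F (W⁻¹ *ᵥ u) := by
          rw [← mulVec_mulVec, algVec_mulVec, mulVec_smul, mulVec_smul, mulVec_smul]
  refine ⟨k, W * diagonal (W⁻¹ *ᵥ u), hMW.trans ?_⟩
  rw [Matrix.map_mul, diagonal_map (map_zero _), ← Matrix.mul_smul, ← Matrix.mul_smul, hl,
    ← diagonal_smul]
  rfl

-- The conic points with parameters `0`, `∞` and `1`, scaled so that their sum represents the point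
-- with parameter `s`.
lemma exists_isUnit_det_conic_frame (hF : 2 < Cardinal.mk F) :
    ∃ L : Matrix (Fin 3) (Fin 3) F, IsUnit L.det ∧
      ∀ v ∈ stdFrame F 3, ∃ k a b : F, L *ᵥ v = k • ![a ^ 2, a * b, b ^ 2] := by
  obtain ⟨s, hs⟩ := Cardinal.exists_notMem_of_length_lt [(0 : F), 1] (by simpa using hF)
  simp only [List.mem_cons, List.not_mem_nil, or_false, not_or] at hs
  obtain ⟨hs0, hs1⟩ := hs
  refine ⟨!![1 - s, 0, s; 0, 0, s; 0, s ^ 2 - s, s], ?_, ?_⟩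
  · rw [det_fin_three, isUnit_iff_ne_zero]
    convert mul_ne_zero (pow_ne_zero 2 hs0) (pow_ne_zero 2 (sub_ne_zero.mpr hs1)) using 1
    simp only [of_apply, cons_val]
    ring
  · rintro _ (rfl | ⟨i, rfl⟩)
    · exact ⟨1, 1, s, by ext j; fin_cases j <;> simp [vecHead, vecTail]⟩
    · fin_cases i
      · exact ⟨1 - s, 1, 0, by ext j; fin_cases j <;> simp⟩
      · exact ⟨s ^ 2 - s, 0, 1, by ext j; fin_cases j <;> simp⟩
      · exact ⟨s, 1, 1, by ext j; fin_cases j <;> simp⟩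

lemma exists_mulVec_eq_smul_of_mimg_conicVecs_subset {M N : Matrix (Fin m) (Fin 3) K}
    (h : mimg M (conicVecs (Set.range (algebraMap F K))) ⊆ mimg N (subplaneVecs F K))
    (k a b : F) : ∃ (c : K) (w : Fin 3 → F),
      M *ᵥ algVec F (k • ![a ^ 2, a * b, b ^ 2]) = c • N *ᵥ algVec F w := by
  simp only [algVec_smul, mulVec_smul]
  rcases eq_or_ne (M *ᵥ algVec F ![a ^ 2, a * b, b ^ 2]) 0 with h0 | h0
  · exact ⟨0, 0, by rw [h0, smul_zero, zero_smul]⟩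
  · obtain ⟨w, hw⟩ :=
      mem_mimg_subplaneVecs_iff.mp (h (mem_mimg_conicVecs_iff.mpr ⟨a, b, h0, rfl⟩))
    obtain ⟨c, -, hc⟩ := exists_smul_eq_of_mem_projPt hw ⟨h0, rfl⟩
    exact ⟨algebraMap F K k * c, w, by rw [← hc, mul_smul]⟩

lemma mimg_subplaneVecs_subset_of_mimg_conicVecs_subset (hF : 2 < Cardinal.mk F)
    {M N : Matrix (Fin 3) (Fin 3) K} (hM : IsUnit M.det) (hN : IsUnit N.det)
    (h : mimg M (conicVecs (Set.range (algebraMap F K))) ⊆ mimg N (subplaneVecs F K)) :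
    mimg M (subplaneVecs F K) ⊆ mimg N (subplaneVecs F K) := by
  obtain ⟨L, hL, hLframe⟩ := exists_isUnit_det_conic_frame hF
  obtain ⟨c, A, hA⟩ := exists_eq_smul_mul_map_of_stdFrame (F := F)
    (M := M * L.map (algebraMap F K)) (by rw [det_mul]; exact hM.mul (isUnit_det_map_iff.mpr hL))
    hN fun v hv => by
      obtain ⟨k, a, b, hLv⟩ := hLframe v hv
      rw [← mulVec_mulVec, ← algVec_mulVec, hLv]
      exact exists_mulVec_eq_smul_of_mimg_conicVecs_subset h k a b
  have hMN (w : Fin 3 → F) : M *ᵥ algVec F w = c • N *ᵥ algVec F ((A * L⁻¹) *ᵥ w) := by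
    calc M *ᵥ algVec F w
        = (M * L.map (algebraMap F K)) *ᵥ algVec F (L⁻¹ *ᵥ w) := by
          rw [← mulVec_mulVec, ← algVec_mulVec, mulVec_mulVec, mul_nonsing_inv L hL, one_mulVec]
      _ = c • N *ᵥ algVec F ((A * L⁻¹) *ᵥ w) := by
          rw [hA, smul_mulVec, ← mulVec_mulVec, ← mulVec_mulVec, algVec_mulVec A]
  intro p hp
  obtain ⟨w, hw⟩ := mem_mimg_subplaneVecs_iff.mp hp
  rw [hMN, ← mulVec_smul] at hw
  exact mem_mimg_subplaneVecs_iff.mpr ⟨_, mem_projPt_mulVec_of_eq_smul rfl hw⟩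

end Frames

section TangentFrame

variable {F : Type} [Field F] [Algebra F K]

lemma eq_zero_of_mulVec_mem_linf {M : Matrix (Fin 3) (Fin 3) K} (hM : IsUnit M.det) {T : PP K 3}
    (hT : mimg M (subplaneVecs F K) ∩ linf K ⊆ {T}) (hTM : T ∈ projPt (M *ᵥ ![0, 0, 1]))
    {a b : F} (hab : (M *ᵥ algVec F ![a, b, 0]) 2 = 0) : a = 0 ∧ b = 0 := by
  have hprop : ∃ c : K, c • ![0, 0, 1] = (algVec F ![a, b, 0] : Fin 3 → K) := by
    rcases eq_or_ne (M *ᵥ algVec F ![a, b, 0]) 0 with h0 | h0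
    · exact ⟨0, mulVec_inj M hM (by rw [h0, zero_smul, mulVec_zero])⟩
    · have hp : Projectivization.mk K _ h0 ∈ projPt (M *ᵥ algVec F ![a, b, 0]) := ⟨h0, rfl⟩
      obtain rfl : Projectivization.mk K _ h0 = T :=
        hT ⟨mem_mimg_subplaneVecs_iff.mpr ⟨_, hp⟩, (mem_linf_iff hp).mpr hab⟩
      obtain ⟨c, -, hc⟩ := exists_smul_eq_of_mem_projPt hTM hp
      exact ⟨c, mulVec_inj M hM (by rw [mulVec_smul, hc])⟩
  obtain ⟨c, hc⟩ := hprop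
  rw [algVec_vec3] at hc
  exact ⟨by simpa using (congrFun hc 0).symm, by simpa using (congrFun hc 1).symm⟩

lemma exists_tangentFrame (hF : 2 < Cardinal.mk F) {B C : Set (PP K 3)} {T : PP K 3}
    (hB : IsBaerSubplane F B) (hT : B ∩ linf K = {T}) (hC : IsFqConic F C) (hCB : C ⊆ B)
    (hTC : T ∈ C) : ∃ (M : Matrix (Fin 3) (Fin 3) K) (δ : K), IsUnit M.det ∧
      δ ∉ Set.range (algebraMap F K) ∧ C = mimg M (conicVecs (Set.range (algebraMap F K))) ∧
      ∀ v, (M *ᵥ v) 2 = v 1 - δ * v 0 := by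
  obtain ⟨N, hN, rfl⟩ := hB
  obtain ⟨M, hM, rfl, hTM⟩ := exists_isFqConic_frame hC hTC
  have hM2 (v : Fin 3 → K) : (M *ᵥ v) 2 = M 2 0 * v 0 + M 2 1 * v 1 := by
    have h22 : M 2 2 = 0 := by
      have hTinf : T ∈ linf K := (hT.symm ▸ Set.mem_singleton T : T ∈ _ ∩ linf K).2
      simpa [mulVec, dotProduct, Fin.sum_univ_three] using (mem_linf_iff hTM).mp hTinf
    simp [mulVec, dotProduct, Fin.sum_univ_three, h22]
  have htangent (a b : F) (h : M 2 0 * algebraMap F K a + M 2 1 * algebraMap F K b = 0) :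
      a = 0 ∧ b = 0 := by
    have hMN := mimg_subplaneVecs_subset_of_mimg_conicVecs_subset hF hM hN hCB
    refine eq_zero_of_mulVec_mem_linf hM (hT ▸ Set.inter_subset_inter_left _ hMN) hTM ?_
    rw [hM2, ← h]
    simp [algVec_vec3]
  have h21 : M 2 1 ≠ 0 := fun h => one_ne_zero (htangent 0 1 (by simp [h])).2
  refine ⟨(M 2 1)⁻¹ • M, -(M 2 0 / M 2 1), ?_, ?_, (mimg_smul (inv_ne_zero h21) M _).symm, ?_⟩
  · rw [det_smul]
    exact ((inv_ne_zero h21).isUnit.pow _).mul hM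
  · rintro ⟨u, hu⟩
    refine one_ne_zero (htangent 1 u ?_).1
    rw [hu, map_one]
    field_simp
    ring
  · intro v
    rw [smul_mulVec, Pi.smul_apply, hM2, smul_eq_mul]
    field_simp
    ring

end TangentFrame

section Pencils

variable {F : Type} [Field F] [Algebra F K]

/-- Vectors representing the points of the Baer pencil with vertex `(0, 0, 1)` over the standard
Baer subline of `ℓ∞`. -/
def pencilVecs (F K : Type) [Field F] [Field K] [Algebra F K] : Set (Fin 3 → K) :=
  {v | v 1 = 0 ∨ ∃ u : F, v 0 = algebraMap F K u * v 1}

lemma smul_mem_pencilVecs (c : K) {v : Fin 3 → K} (hv : v ∈ pencilVecs F K) :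
    c • v ∈ pencilVecs F K := by
  rcases hv with h | ⟨u, h⟩
  · exact Or.inl (by simp [h])
  · exact Or.inr ⟨u, by simp only [Pi.smul_apply, smul_eq_mul, h]; ring⟩

lemma mem_pencilVecs_iff {v : Fin 3 → K} :
    v ∈ pencilVecs F K ↔ ∃ a b : F, (a ≠ 0 ∨ b ≠ 0) ∧
      ∃ k l : K, k • ![0, 0, 1] + l • algVec F ![a, b, 0] = v := by
  simp only [algVec_vec3, map_zero]
  constructor
  · rintro (h | ⟨u, h⟩)
    · refine ⟨1, 0, Or.inl one_ne_zero, v 2, v 0, ?_⟩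
      ext i; fin_cases i <;> simp [h]
    · refine ⟨u, 1, Or.inr one_ne_zero, v 2, v 1, ?_⟩
      ext i; fin_cases i <;> simp [h, mul_comm, -algebraMap_smul]
  · rintro ⟨a, b, -, k, l, rfl⟩
    rcases eq_or_ne b 0 with rfl | hb
    · exact Or.inl (by simp)
    · refine Or.inr ⟨a / b, ?_⟩
      have hb' : algebraMap F K b ≠ 0 := by simpa
      simp only [Pi.add_apply, Pi.smul_apply, smul_eq_mul, cons_val, map_div₀]
      field_simp
      ring

lemma biUnion_lineTh_eq_mimg_pencilVecs {G : Matrix (Fin 3) (Fin 3) K} (hG : IsUnit G.det)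
    {P : PP K 3} (hP : P ∈ projPt (G *ᵥ ![0, 0, 1])) :
    ⋃ X ∈ mimg G (sublineVecs F K), lineTh P X = mimg G (pencilVecs F K) := by
  ext p
  obtain ⟨v, hv⟩ := exists_mem_projPt_mulVec hG p
  rw [mem_mimg_iff hG (fun c _ _ => smul_mem_pencilVecs c) hv]
  simp only [Set.mem_iUnion, exists_prop, mem_pencilVecs_iff, mem_mimg_sublineVecs_iff]
  constructor
  · rintro ⟨X, ⟨a, b, hX⟩, hpX⟩
    obtain ⟨k, l, hkl⟩ := (mem_lineTh_iff hP hX hv).mp hpX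
    refine ⟨a, b, ?_, k, l, mulVec_inj G hG (by rw [← hkl, mulVec_add, mulVec_smul, mulVec_smul])⟩
    by_contra! hab
    exact hX.1 (by rw [algVec_eq_zero_iff.mpr (by simp [hab]), mulVec_zero])
  · rintro ⟨a, b, hab, k, l, rfl⟩
    have h0 : G *ᵥ algVec F ![a, b, 0] ≠ 0 :=
      mulVec_ne_zero hG fun h => by simp_all [algVec_eq_zero_iff]
    have hX : Projectivization.mk K _ h0 ∈ projPt (G *ᵥ algVec F ![a, b, 0]) := ⟨h0, rfl⟩
    refine ⟨_, ⟨a, b, hX⟩, (mem_lineTh_iff hP hX hv).mpr ⟨k, l, ?_⟩⟩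
    rw [mulVec_add, mulVec_smul, mulVec_smul]

lemma exists_matrix_vertex {M : Matrix (Fin 3) (Fin 3) K} (hM : IsUnit M.det) {P : PP K 3}
    (hP : P ∉ mimg M (linfVecs K)) : ∃ G : Matrix (Fin 3) (Fin 3) K, IsUnit G.det ∧
      (∀ a b, G *ᵥ ![a, b, 0] = M *ᵥ ![a, b, 0]) ∧ P ∈ projPt (G *ᵥ ![0, 0, 1]) := by
  obtain ⟨v, hv⟩ := exists_mem_projPt_mulVec hM P
  have hv2 : v 2 ≠ 0 := by
    intro h
    refine hP ⟨v, ⟨?_, h⟩, hv⟩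
    rintro rfl
    exact hv.1 (mulVec_zero M)
  refine ⟨M * !![1, 0, v 0; 0, 1, v 1; 0, 0, v 2], ?_, fun a b => ?_, ?_⟩
  · rw [det_mul]
    exact hM.mul (by simp [det_fin_three, hv2])
  · rw [← mulVec_mulVec]
    congr 1
    ext i; fin_cases i <;> simp
  · convert hv using 2
    rw [← mulVec_mulVec]
    congr 1
    ext i; fin_cases i <;> simp

lemma exists_matrix_subline_point {M : Matrix (Fin 3) (Fin 3) K} (hM : IsUnit M.det) {X : PP K 3}
    (hX : X ∈ mimg M (sublineVecs F K)) : ∃ G : Matrix (Fin 3) (Fin 3) K, IsUnit G.det ∧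
      mimg G (sublineVecs F K) = mimg M (sublineVecs F K) ∧ X ∈ projPt (G *ᵥ ![1, 0, 0]) ∧
      G *ᵥ ![0, 0, 1] = M *ᵥ ![0, 0, 1] := by
  obtain ⟨_, ⟨θ, rfl⟩ | rfl, hX⟩ := hX
  · let R : Matrix (Fin 3) (Fin 3) F := !![θ, 1, 0; 1, 0, 0; 0, 0, 1]
    have hR (a b c : F) : R *ᵥ ![a, b, c] = ![θ * a + b, a, c] := by
      ext i; fin_cases i <;> simp [R, mul_comm]
    refine ⟨M * R.map (algebraMap F K), ?_, ?_, ?_, ?_⟩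
    · rw [det_mul]
      exact hM.mul (isUnit_det_map_iff.mpr (by simp [R, det_fin_three]))
    · ext p
      simp only [mem_mimg_sublineVecs_iff, ← mulVec_mulVec, ← algVec_mulVec, hR]
      constructor
      · rintro ⟨a, b, hp⟩
        exact ⟨_, _, hp⟩
      · rintro ⟨a, b, hp⟩
        exact ⟨b, a - θ * b, by rwa [add_sub_cancel]⟩
    · convert hX using 2
      rw [← mulVec_mulVec]
      congr 1
      ext i; fin_cases i <;> simp [R, mulVec, dotProduct, Fin.sum_univ_three]
    · rw [← mulVec_mulVec]
      congr 1
      ext i; fin_cases i <;> simp [R, mulVec, dotProduct, Fin.sum_univ_three]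
  · exact ⟨M, hM, rfl, hX, rfl⟩

lemma exists_pencilVecs_of_isLinfBaerPencil {𝒦 : Set (PP K 3)} {P : PP K 3}
    (h : IsLinfBaerPencil F 𝒦 P) : ∃ G : Matrix (Fin 3) (Fin 3) K, IsUnit G.det ∧
      (∀ v, (G *ᵥ v) 2 = v 1) ∧ P ∈ projPt (G *ᵥ ![0, 0, 1]) ∧ 𝒦 = mimg G (pencilVecs F K) := by
  obtain ⟨hPinf, _, _, ⟨M, hM, rfl, rfl⟩, hPℓ, ⟨X, ⟨hXb, hXinf⟩, -⟩, rfl⟩ := h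
  obtain ⟨M', hM', hMM', hPM'⟩ := exists_matrix_vertex hM hPℓ
  have hbase : mimg M' (sublineVecs F K) = mimg M (sublineVecs F K) := by
    ext p
    simp only [mem_mimg_sublineVecs_iff, algVec_vec3, map_zero, hMM']
  rw [← hbase] at hXb ⊢
  obtain ⟨G, hG, hGM', hXG, hG2⟩ := exists_matrix_subline_point hM' hXb
  rw [← hG2] at hPM'
  have h20 : G 2 0 = 0 := by
    simpa [mulVec, dotProduct, Fin.sum_univ_three] using (mem_linf_iff hXG).mp hXinf
  have h22 : G 2 2 = 0 := by
    simpa [mulVec, dotProduct, Fin.sum_univ_three] using (mem_linf_iff hPM').mp hPinf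
  have h21 : G 2 1 ≠ 0 := fun h21 => hG.ne_zero (by simp [det_fin_three, h20, h21, h22])
  refine ⟨(G 2 1)⁻¹ • G, ?_, fun v => ?_, ?_, ?_⟩
  · rw [det_smul]
    exact ((inv_ne_zero h21).isUnit.pow _).mul hG
  · simp [mulVec, dotProduct, Fin.sum_univ_three, h20, h22, h21]
  · rwa [smul_mulVec, projPt_smul (inv_ne_zero h21)]
  · rw [mimg_smul (inv_ne_zero h21), ← hGM', biUnion_lineTh_eq_mimg_pencilVecs hG hPM']

lemma isLinfBaerPencil_mimg_pencilVecs {G : Matrix (Fin 3) (Fin 3) K} (hG : IsUnit G.det)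
    (hG2 : ∀ v, (G *ᵥ v) 2 = v 1) {P : PP K 3} (hP : P ∈ projPt (G *ᵥ ![0, 0, 1])) :
    IsLinfBaerPencil F (mimg G (pencilVecs F K)) P := by
  refine ⟨(mem_linf_iff hP).mpr (by simp [hG2]), _, _, ⟨G, hG, rfl, rfl⟩, ?_, ?_,
    (biUnion_lineTh_eq_mimg_pencilVecs hG hP).symm⟩
  · have hcone (c : K) (hc : c ≠ 0) (v : Fin 3 → K) (hv : v ∈ linfVecs K) : c • v ∈ linfVecs K :=
      ⟨smul_ne_zero hc hv.1, by simp [hv.2]⟩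
    rw [mem_mimg_iff hG hcone hP]
    exact fun h => one_ne_zero h.2
  · have h0 : G *ᵥ ![1, 0, 0] ≠ 0 := mulVec_ne_zero hG (by simp)
    have hX : Projectivization.mk K _ h0 ∈ projPt (G *ᵥ ![1, 0, 0]) := ⟨h0, rfl⟩
    refine ⟨_, ⟨⟨_, Or.inr rfl, hX⟩, (mem_linf_iff hX).mpr (by simp [hG2])⟩, ?_⟩
    rintro Y ⟨hYb, hYinf⟩
    obtain ⟨a, b, hY⟩ := mem_mimg_sublineVecs_iff.mp hYb
    have hb : b = 0 := by simpa [hG2, algVec_vec3] using (mem_linf_iff hY).mp hYinf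
    refine eq_of_mem_projPt (mem_projPt_mulVec_of_eq_smul (c := algebraMap F K a) ?_ hY) hX
    simp [hb, algVec_vec3, -algebraMap_smul]

end Pencils

section DividedDifferences

variable {S : Subfield K} {δ h₀ h₁ h₂ : K}

lemma second_dividedDifference_mem (hδ : δ ∉ S) (h : ∀ θ ∈ S, h₀ * θ + h₁ + h₂ / (θ - δ) ∈ S)
    {a b c : S} (hab : a ≠ b) (hac : a ≠ c) (hbc : b ≠ c) :
    h₂ / ((a - δ) * (b - δ) * (c - δ)) ∈ S := by
  have hne (x : S) : (x : K) - δ ≠ 0 := sub_ne_zero.mpr (ne_of_mem_of_not_mem x.2 hδ)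
  have hsub {x y : S} (hxy : x ≠ y) : (x - y : K) ≠ 0 :=
    sub_ne_zero.mpr (Subtype.coe_ne_coe.mpr hxy)
  have hfirst {x y : S} (hxy : x ≠ y) : h₀ - h₂ / ((x - δ) * (y - δ)) ∈ S := by
    have hx := hne x
    have hy := hne y
    have hxy := hsub hxy
    convert S.div_mem (S.sub_mem (h x x.2) (h y y.2)) (S.sub_mem x.2 y.2) using 1
    field_simp
    ring
  have ha := hne a
  have hb := hne b
  have hc := hne c
  have hbc' := hsub hbc
  convert S.div_mem (S.sub_mem (hfirst hab) (hfirst hac)) (S.sub_mem b.2 c.2) using 1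
  field_simp
  ring

lemma polar_coeff_eq_zero_of_forall_mem (hS : 4 ≤ Cardinal.mk S) (hδ : δ ∉ S)
    (h : ∀ θ ∈ S, h₀ * θ + h₁ + h₂ / (θ - δ) ∈ S) : h₂ = 0 := by
  obtain ⟨f⟩ : Nonempty (Fin 4 ↪ S) := by rwa [← Cardinal.le_def, Cardinal.mk_fin]
  by_contra hne
  have hf {i j : Fin 4} (hij : i ≠ j) : f i ≠ f j := f.injective.ne hij
  have hfδ (i : Fin 4) : (f i : K) - δ ≠ 0 := sub_ne_zero.mpr (ne_of_mem_of_not_mem (f i).2 hδ)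
  have h0 := hfδ 0
  have h1 := hfδ 1
  have h2 := hfδ 2
  have h3 := hfδ 3
  have h23 : (f 2 : K) - f 3 ≠ 0 := sub_ne_zero.mpr (Subtype.coe_ne_coe.mpr (hf (by decide)))
  -- The quotient of two second divided differences of `θ ↦ h₀ * θ + h₁ + h₂ / (θ - δ)` is a
  -- Möbius function of `δ`.
  have hquot : (f 3 - δ) / (f 2 - δ) ∈ S := by
    convert S.div_mem
      (second_dividedDifference_mem (a := f 0) (b := f 1) (c := f 2) hδ h (hf (by decide))
        (hf (by decide)) (hf (by decide)))
      (second_dividedDifference_mem (a := f 0) (b := f 1) (c := f 3) hδ h (hf (by decide))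
        (hf (by decide)) (hf (by decide))) using 1
    field_simp
  have hδ_eq : δ = f 2 - (f 2 - f 3) / (1 - (f 3 - δ) / (f 2 - δ)) := by
    rw [one_sub_div h2, sub_sub_sub_cancel_right]
    field_simp
    ring
  exact hδ (hδ_eq ▸ S.sub_mem (f 2).2
    (S.div_mem (S.sub_mem (f 2).2 (f 3).2) (S.sub_mem S.one_mem hquot)))

end DividedDifferences

section ChordPencil

variable {F : Type} [Field F] [Algebra F K]

/-- The coordinate change taking `(0, 0, 1)` to the point `(1, δ, δ²)` of the standard conic, and
the line `y = 0` to the line joining it to `(0, 0, 1)`. -/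
def chordMatrix (δ : K) : Matrix (Fin 3) (Fin 3) K :=
  !![0, 0, 1; 0, 1, δ; 1, δ, δ ^ 2]

lemma chordMatrix_mulVec (δ x y z : K) :
    chordMatrix δ *ᵥ ![x, y, z] = ![z, y + δ * z, x + δ * y + δ ^ 2 * z] := by
  ext i
  fin_cases i <;>
    simp only [chordMatrix, mulVec, dotProduct, Fin.sum_univ_three, of_apply, cons_val,
      Fin.zero_eta, Fin.mk_one, Fin.reduceFinMk] <;>
    ring

lemma chordMatrix_mulVec_conic (δ θ : K) :
    chordMatrix δ *ᵥ ![θ * (θ - δ), θ - δ, 1] = ![1, θ, θ ^ 2] := by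
  rw [chordMatrix_mulVec]
  ring_nf

lemma isUnit_det_chordMatrix (δ : K) : IsUnit (chordMatrix δ).det := by
  simp [chordMatrix, det_fin_three]

lemma exists_eq_algebraMap_of_forall_mem (hF : 4 ≤ Cardinal.mk F) {δ h₀ h₁ h₂ : K}
    (hδ : δ ∉ Set.range (algebraMap F K)) (h : ∀ θ : F, ∃ u : F,
      h₀ * algebraMap F K θ + h₁ + h₂ / (algebraMap F K θ - δ) = algebraMap F K u) :
    ∃ r s : F, h₀ = algebraMap F K s ∧ h₁ = algebraMap F K r ∧ h₂ = 0 := by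
  obtain rfl : h₂ = 0 := by
    have hcard : 4 ≤ Cardinal.mk (algebraMap F K).fieldRange := by
      rwa [← Cardinal.mk_range_eq _ (algebraMap F K).injective] at hF
    refine polar_coeff_eq_zero_of_forall_mem (h₀ := h₀) (h₁ := h₁) hcard hδ ?_
    rintro _ ⟨θ, rfl⟩
    obtain ⟨u, hu⟩ := h θ
    exact ⟨u, hu.symm⟩
  obtain ⟨r, hr⟩ := h 0
  obtain ⟨t, ht⟩ := h 1
  refine ⟨r, t - r, ?_, ?_, rfl⟩
  · rw [map_sub, ← hr, ← ht]
    simp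
  · simpa using hr

lemma mimg_conicVecs_subset_mimg_pencilVecs (M : Matrix (Fin m) (Fin 3) K) (δ : K) :
    mimg M (conicVecs (Set.range (algebraMap F K))) ⊆
      mimg (M * chordMatrix δ) (pencilVecs F K) := by
  rintro p ⟨_, ⟨_, ⟨θ, rfl⟩, rfl⟩ | rfl, hp⟩
  · refine ⟨![algebraMap F K θ * (algebraMap F K θ - δ), algebraMap F K θ - δ, 1],
      Or.inr ⟨θ, rfl⟩, ?_⟩
    rwa [← mulVec_mulVec, chordMatrix_mulVec_conic]
  · refine ⟨![1, 0, 0], Or.inl rfl, ?_⟩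
    rw [← mulVec_mulVec, chordMatrix_mulVec]
    simpa using hp

lemma exists_row_zero_eq_of_forall_mulVec_mem_pencilVecs (hF : 4 ≤ Cardinal.mk F)
    {H : Matrix (Fin 3) (Fin 3) K} {δ : K} (hδ : δ ∉ Set.range (algebraMap F K))
    (hH1 : H 1 = ![0, 1, 0]) (h : ∀ θ : F, H *ᵥ ![algebraMap F K θ * (algebraMap F K θ - δ),
      algebraMap F K θ - δ, 1] ∈ pencilVecs F K) :
    ∃ r s : F, H 0 = ![algebraMap F K s, algebraMap F K r, 0] := by
  have hrow (θ : F) : ∃ u : F, H 0 0 * algebraMap F K θ + H 0 1 +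
      H 0 2 / (algebraMap F K θ - δ) = algebraMap F K u := by
    have hθ : algebraMap F K θ - δ ≠ 0 := sub_ne_zero.mpr fun h => hδ ⟨θ, h⟩
    have h' := h θ
    simp only [pencilVecs, Set.mem_ofPred_eq, mulVec, dotProduct, Fin.sum_univ_three, hH1, cons_val,
      zero_mul, one_mul, zero_add, add_zero, hθ, false_or, mul_one] at h'
    obtain ⟨u, hu⟩ := h'
    refine ⟨u, mul_right_cancel₀ hθ ?_⟩
    rw [← hu]
    field_simp
  obtain ⟨r, s, h0, h1, h2⟩ := exists_eq_algebraMap_of_forall_mem hF hδ hrow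
  exact ⟨r, s, by ext i; fin_cases i <;> simp [h0, h1, h2]⟩

lemma mulVec_mem_pencilVecs_iff {H : Matrix (Fin 3) (Fin 3) K} {r s : F} (hs : s ≠ 0)
    (hH0 : H 0 = ![algebraMap F K s, algebraMap F K r, 0]) (hH1 : H 1 = ![0, 1, 0])
    {v : Fin 3 → K} : H *ᵥ v ∈ pencilVecs F K ↔ v ∈ pencilVecs F K := by
  have hv1 : (H *ᵥ v) 1 = v 1 := by simp [mulVec, dotProduct, Fin.sum_univ_three, hH1]
  have hv0 : (H *ᵥ v) 0 = algebraMap F K s * v 0 + algebraMap F K r * v 1 := by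
    simp [mulVec, dotProduct, Fin.sum_univ_three, hH0, -algebraMap_smul]
  have hs' : algebraMap F K s ≠ 0 := by simpa
  simp only [pencilVecs, Set.mem_ofPred_eq, hv1, hv0]
  refine or_congr_right ⟨?_, ?_⟩
  · rintro ⟨u, hu⟩
    refine ⟨(u - r) / s, mul_left_cancel₀ hs' ?_⟩
    rw [map_div₀, map_sub]
    field_simp
    linear_combination hu
  · rintro ⟨u, hu⟩
    exact ⟨s * u + r, by rw [hu, map_add, map_mul]; ring⟩

lemma mul_chordMatrix_mulVec_two {M : Matrix (Fin 3) (Fin 3) K} {δ : K}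
    (hM : ∀ v, (M *ᵥ v) 2 = v 1 - δ * v 0) (v : Fin 3 → K) :
    ((M * chordMatrix δ) *ᵥ v) 2 = v 1 := by
  rw [← mulVec_mulVec, hM]
  simp [chordMatrix, mulVec, dotProduct, Fin.sum_univ_three]

lemma row_one_eq_of_mulVec_apply_eq {G : Matrix (Fin m) (Fin 3) K} {H : Matrix (Fin 3) (Fin 3) K}
    {i : Fin m} (hGH : ∀ v, ((G * H) *ᵥ v) i = v 1) (hG : ∀ v, (G *ᵥ v) i = v 1) :
    H 1 = ![0, 1, 0] := by
  ext j
  have hj := hGH (Pi.single j 1)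
  rw [← mulVec_mulVec, hG, mulVec_single_one, col_apply] at hj
  rw [hj]
  fin_cases j <;> rfl

lemma mimg_pencilVecs_eq_of_forall_mem (hF : 4 ≤ Cardinal.mk F)
    {G N : Matrix (Fin 3) (Fin 3) K} {δ : K} (hδ : δ ∉ Set.range (algebraMap F K))
    (hN : IsUnit N.det) (hN2 : ∀ v, (N *ᵥ v) 2 = v 1)
    (hG : IsUnit G.det) (hG2 : ∀ v, (G *ᵥ v) 2 = v 1)
    (h : ∀ θ : F, projPt (N *ᵥ ![algebraMap F K θ * (algebraMap F K θ - δ),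
      algebraMap F K θ - δ, 1]) ⊆ mimg G (pencilVecs F K)) :
    mimg G (pencilVecs F K) = mimg N (pencilVecs F K) ∧
      projPt (G *ᵥ ![0, 0, 1]) = projPt (N *ᵥ ![0, 0, 1]) := by
  have hcone (c : K) (_ : c ≠ 0) (v : Fin 3 → K) (hv : v ∈ pencilVecs F K) :
      c • v ∈ pencilVecs F K := smul_mem_pencilVecs c hv
  obtain ⟨H, rfl⟩ : ∃ H, N = G * H := ⟨G⁻¹ * N, by rw [← mul_assoc, mul_nonsing_inv G hG, one_mul]⟩
  have hH1 := row_one_eq_of_mulVec_apply_eq hN2 hG2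
  have hconic (θ : F) : H *ᵥ ![algebraMap F K θ * (algebraMap F K θ - δ),
      algebraMap F K θ - δ, 1] ∈ pencilVecs F K := by
    have h0 : (G * H) *ᵥ ![algebraMap F K θ * (algebraMap F K θ - δ),
        algebraMap F K θ - δ, 1] ≠ 0 := mulVec_ne_zero hN (by simp)
    refine (mem_mimg_iff hG hcone ?_).mp (h θ ⟨h0, rfl⟩)
    rw [mulVec_mulVec]
    exact ⟨h0, rfl⟩
  obtain ⟨r, s, hH0⟩ := exists_row_zero_eq_of_forall_mulVec_mem_pencilVecs hF hδ hH1 hconic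
  have hdet : H.det = algebraMap F K s * H 2 2 := by
    simp [det_fin_three, hH0, hH1, -algebraMap_smul]
  have hHdet : IsUnit H.det := isUnit_of_mul_isUnit_right (det_mul G H ▸ hN)
  rw [hdet, isUnit_iff_ne_zero, mul_ne_zero_iff] at hHdet
  constructor
  · ext p
    obtain ⟨v, hv⟩ := exists_mem_projPt_mulVec hN p
    have hv' : p ∈ projPt (G *ᵥ H *ᵥ v) := by rwa [mulVec_mulVec]
    rw [mem_mimg_iff hG hcone hv', mem_mimg_iff hN hcone hv,
      mulVec_mem_pencilVecs_iff (by simpa using hHdet.1) hH0 hH1]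
  · have hvertex : H *ᵥ ![0, 0, 1] = H 2 2 • ![0, 0, 1] := by
      ext i
      fin_cases i <;> simp [mulVec, dotProduct, Fin.sum_univ_three, hH0, hH1]
    rw [← mulVec_mulVec, hvertex, mulVec_smul, projPt_smul hHdet.2]

lemma mimg_pencilVecs_eq_of_mimg_conicVecs_subset (hF : 4 ≤ Cardinal.mk F)
    {M G : Matrix (Fin 3) (Fin 3) K} {δ : K} (hM : IsUnit M.det)
    (hδ : δ ∉ Set.range (algebraMap F K)) (hM2 : ∀ v, (M *ᵥ v) 2 = v 1 - δ * v 0)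
    (hG : IsUnit G.det) (hG2 : ∀ v, (G *ᵥ v) 2 = v 1)
    (hsub : mimg M (conicVecs (Set.range (algebraMap F K))) ⊆ mimg G (pencilVecs F K)) :
    mimg G (pencilVecs F K) = mimg (M * chordMatrix δ) (pencilVecs F K) ∧
      projPt (G *ᵥ ![0, 0, 1]) = projPt ((M * chordMatrix δ) *ᵥ ![0, 0, 1]) := by
  refine mimg_pencilVecs_eq_of_forall_mem hF hδ ?_ (mul_chordMatrix_mulVec_two hM2) hG hG2 ?_
  · rw [det_mul]
    exact hM.mul (isUnit_det_chordMatrix δ)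
  · intro θ p hp
    rw [← mulVec_mulVec, chordMatrix_mulVec_conic] at hp
    exact hsub ⟨_, Or.inl ⟨_, ⟨θ, rfl⟩, rfl⟩, hp⟩

end ChordPencil

section Conics

open Polynomial

variable {F : Type} [Field F] [Algebra F K]

lemma mem_mimg_conicVecs_univ_iff {N : Matrix (Fin 3) (Fin 3) K} (hN : IsUnit N.det) {p : PP K 3}
    {v : Fin 3 → K} (hp : p ∈ projPt (N *ᵥ v)) :
    p ∈ mimg N (conicVecs Set.univ) ↔ v 1 ^ 2 = v 0 * v 2 := by
  constructor
  · rintro ⟨w, hw, hpw⟩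
    obtain ⟨c, -, hc⟩ := exists_smul_eq_of_mem_projPt hpw hp
    rw [← mulVec_smul] at hc
    obtain rfl := mulVec_inj N hN hc
    rcases hw with ⟨θ, -, rfl⟩ | rfl
    · simp only [Pi.smul_apply, smul_eq_mul, cons_val]
      ring
    · simp
  · intro hv
    rcases eq_or_ne (v 0) 0 with h0 | h0
    · have h1 : v 1 = 0 := by simpa [h0] using hv
      refine ⟨_, Or.inr rfl, mem_projPt_mulVec_of_eq_smul (c := v 2) ?_ hp⟩
      ext i
      fin_cases i <;> simp [h0, h1]
    · refine ⟨_, Or.inl ⟨v 1 / v 0, trivial, rfl⟩,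
        mem_projPt_mulVec_of_eq_smul (c := v 0) ?_ hp⟩
      have h2 : v 2 = v 0 * (v 1 / v 0) ^ 2 := by
        field_simp
        rw [hv, mul_comm]
      ext i
      fin_cases i <;> simp [h2, mul_div_cancel₀, h0]

/-- The `i`-th coordinate of the image under `A` of the point `(1, X, X²)` of the standard conic,
as a polynomial in the parameter `X`. -/
def conicCoord (A : Matrix (Fin m) (Fin 3) K) (i : Fin m) : K[X] :=
  C (A i 0) + C (A i 1) * X + C (A i 2) * X ^ 2

lemma eval_conicCoord (A : Matrix (Fin m) (Fin 3) K) (i : Fin m) (x : K) :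
    (conicCoord A i).eval x = (A *ᵥ ![1, x, x ^ 2]) i := by
  simp [conicCoord, mulVec, dotProduct, Fin.sum_univ_three]

lemma natDegree_conicCoord_le (A : Matrix (Fin m) (Fin 3) K) (i : Fin m) :
    (conicCoord A i).natDegree ≤ 2 := by
  unfold conicCoord
  compute_degree

lemma coeff_conicCoord_two (A : Matrix (Fin m) (Fin 3) K) (i : Fin m) :
    (conicCoord A i).coeff 2 = A i 2 := by
  simp [conicCoord]

/-- The pullback under `A` of the equation of the standard conic, on its points `(1, X, X²)`: its
roots are the parameters of the points that `A` maps into the conic. -/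
def conicPullback (A : Matrix (Fin 3) (Fin 3) K) : K[X] :=
  conicCoord A 1 ^ 2 - conicCoord A 0 * conicCoord A 2

lemma eval_conicPullback_eq_zero_iff {A : Matrix (Fin 3) (Fin 3) K} {x : K} :
    (conicPullback A).eval x = 0 ↔ (A *ᵥ ![1, x, x ^ 2]) 1 ^ 2 =
      (A *ᵥ ![1, x, x ^ 2]) 0 * (A *ᵥ ![1, x, x ^ 2]) 2 := by
  simp only [conicPullback, eval_sub, eval_pow, eval_mul, eval_conicCoord, sub_eq_zero]

lemma natDegree_conicPullback_le (A : Matrix (Fin 3) (Fin 3) K) :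
    (conicPullback A).natDegree ≤ 4 :=
  natDegree_sub_le_of_le (natDegree_pow_le_of_le 2 (natDegree_conicCoord_le A 1))
    (natDegree_mul_le_of_le (natDegree_conicCoord_le A 0) (natDegree_conicCoord_le A 2))

lemma coeff_conicPullback_four (A : Matrix (Fin 3) (Fin 3) K) :
    (conicPullback A).coeff 4 = A 1 2 ^ 2 - A 0 2 * A 2 2 := by
  have hmul : (conicCoord A 0 * conicCoord A 2).coeff (2 + 2) = A 0 2 * A 2 2 := by
    rw [coeff_mul_add_eq_of_natDegree_le (natDegree_conicCoord_le A 0)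
      (natDegree_conicCoord_le A 2), coeff_conicCoord_two, coeff_conicCoord_two]
  have hpow : (conicCoord A 1 ^ 2).coeff (2 * 2) = A 1 2 ^ 2 := by
    rw [coeff_pow_of_natDegree_le (natDegree_conicCoord_le A 1), coeff_conicCoord_two]
  rw [conicPullback, coeff_sub, hpow, hmul]

lemma eq_zero_of_natDegree_le_of_coeff_eq_zero {d : ℕ} (hF : d ≤ Cardinal.mk F) {f : K[X]}
    (hdeg : f.natDegree ≤ d) (hcoeff : f.coeff d = 0)
    (h : ∀ θ : F, f.eval (algebraMap F K θ) = 0) : f = 0 := by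
  obtain ⟨e⟩ : Nonempty (Fin d ↪ F) := by rwa [← Cardinal.le_def, Cardinal.mk_fin]
  have hlt : f.degree < d := lt_of_le_of_ne (natDegree_le_iff_degree_le.mp hdeg) fun hd =>
    coeff_ne_zero_of_eq_degree hd hcoeff
  by_contra hf
  refine hf (eq_zero_of_natDegree_lt_card_of_eval_eq_zero f
    ((algebraMap F K).injective.comp e.injective) (fun i => h (e i)) ?_)
  rw [Fintype.card_fin]
  exact (natDegree_lt_iff_degree_lt hf).mpr hlt

lemma projPt_subset_mimg_conicVecs_univ (hF : 4 ≤ Cardinal.mk F) {M N : Matrix (Fin 3) (Fin 3) K}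
    (hN : IsUnit N.det)
    (h : mimg M (conicVecs (Set.range (algebraMap F K))) ⊆ mimg N (conicVecs Set.univ)) (x : K) :
    projPt (M *ᵥ ![1, x, x ^ 2]) ⊆ mimg N (conicVecs Set.univ) := by
  obtain ⟨A, rfl⟩ : ∃ A, M = N * A := ⟨N⁻¹ * M, by rw [← mul_assoc, mul_nonsing_inv N hN, one_mul]⟩
  have hA {v : Fin 3 → K} (hv : v ∈ conicVecs (Set.range (algebraMap F K))) :
      (A *ᵥ v) 1 ^ 2 = (A *ᵥ v) 0 * (A *ᵥ v) 2 := by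
    rcases eq_or_ne (N *ᵥ A *ᵥ v) 0 with h0 | h0
    · simp [mulVec_inj N hN (h0.trans N.mulVec_zero.symm)]
    · refine (mem_mimg_conicVecs_univ_iff hN ⟨h0, rfl⟩).mp (h ⟨v, hv, ?_⟩)
      rw [← mulVec_mulVec]
      exact ⟨h0, rfl⟩
  have hcoeff : (conicPullback A).coeff 4 = 0 := by
    rw [coeff_conicPullback_four, sub_eq_zero]
    simpa [mulVec, dotProduct, Fin.sum_univ_three] using hA (Or.inr rfl)
  have hzero : conicPullback A = 0 :=
    eq_zero_of_natDegree_le_of_coeff_eq_zero hF (natDegree_conicPullback_le A) hcoeff fun θ =>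
      eval_conicPullback_eq_zero_iff.mpr (hA (Or.inl ⟨_, ⟨θ, rfl⟩, rfl⟩))
  intro p hp
  rw [← mulVec_mulVec] at hp
  refine (mem_mimg_conicVecs_univ_iff hN hp).mpr (eval_conicPullback_eq_zero_iff.mp ?_)
  rw [hzero, eval_zero]

end Conics

theorem statement_3_general {F K : Type} [Field F] [Field K] [Algebra F K]
    (hF : 4 ≤ Cardinal.mk F) (B : Set (PP K 3)) (hB : IsBaerSubplane F B)
    (T : PP K 3) (hT : B ∩ linf K = {T})
    (C : Set (PP K 3)) (hC : IsFqConic F C) (hCB : C ⊆ B) (hTC : T ∈ C) :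
    (∃! 𝒦 : Set (PP K 3), (∃ P : PP K 3, IsLinfBaerPencil F 𝒦 P) ∧ C ⊆ 𝒦) ∧
    (∀ (𝒦 : Set (PP K 3)) (P : PP K 3), IsLinfBaerPencil F 𝒦 P → C ⊆ 𝒦 →
      ∀ D : Set (PP K 3), IsFq2Conic D → C ⊆ D → P ∈ D ∩ linf K) := by
  have hF2 : 2 < Cardinal.mk F := lt_of_lt_of_le (by norm_num) hF
  obtain ⟨M, δ, hM, hδ, rfl, hM2⟩ := exists_tangentFrame hF2 hB hT hC hCB hTC
  have hN : IsUnit (M * chordMatrix δ).det := det_mul M _ ▸ hM.mul (isUnit_det_chordMatrix δ)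
  have hvertex : (M * chordMatrix δ) *ᵥ ![0, 0, 1] = M *ᵥ ![1, δ, δ ^ 2] := by
    rw [← mulVec_mulVec, chordMatrix_mulVec]
    simp
  refine ⟨⟨mimg (M * chordMatrix δ) (pencilVecs F K),
    ⟨⟨_, isLinfBaerPencil_mimg_pencilVecs hN (mul_chordMatrix_mulVec_two hM2)
      ⟨mulVec_ne_zero hN (by simp), rfl⟩⟩, mimg_conicVecs_subset_mimg_pencilVecs M δ⟩, ?_⟩, ?_⟩
  · rintro _ ⟨⟨P, hP⟩, hsub⟩
    obtain ⟨G, hG, hG2, -, rfl⟩ := exists_pencilVecs_of_isLinfBaerPencil hP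
    exact (mimg_pencilVecs_eq_of_mimg_conicVecs_subset hF hM hδ hM2 hG hG2 hsub).1
  · rintro _ P hP hsub _ ⟨N, hND, rfl⟩ hCD
    refine ⟨?_, hP.1⟩
    obtain ⟨G, hG, hG2, hPG, rfl⟩ := exists_pencilVecs_of_isLinfBaerPencil hP
    rw [(mimg_pencilVecs_eq_of_mimg_conicVecs_subset hF hM hδ hM2 hG hG2 hsub).2, hvertex] at hPG
    exact projPt_subset_mimg_conicVecs_univ hF hND hCD δ hPG

/-- An `F_q`-conic `C` through `T̄` in a Baer subplane tangent to `ℓ∞` at `T̄` lies in a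
unique `ℓ∞`-Baer pencil, whose vertex lies on `C⁺ ∩ ℓ∞`. -/
theorem statement_3
    {F K : Type} [Field F] [Field K] [Fintype F] [Fintype K] [Algebra F K]
    (q : ℕ) (hq : Fintype.card F = q) (hK : Fintype.card K = q ^ 2)
    (τ : K) (t0 t1 : F)
    (hτ : τ ^ 2 = algebraMap F K t1 * τ + algebraMap F K t0)
    (hτF : τ ∉ Set.range (algebraMap F K))
    (c0 c1 : K → F)
    (hc : ∀ x : K, x = algebraMap F K (c0 x) + algebraMap F K (c1 x) * τ)
    (hq4 : 4 ≤ q)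
    (B : Set (PP K 3)) (hB : IsBaerSubplane F B)
    (T : PP K 3) (hT : B ∩ linf K = {T})
    (C : Set (PP K 3)) (hC : IsFqConic F C) (hCB : C ⊆ B) (hTC : T ∈ C) :
    (∃! 𝒦 : Set (PP K 3), (∃ P : PP K 3, IsLinfBaerPencil F 𝒦 P) ∧ C ⊆ 𝒦) ∧
    (∀ (𝒦 : Set (PP K 3)) (P : PP K 3), IsLinfBaerPencil F 𝒦 P → C ⊆ 𝒦 →
      ∀ D : Set (PP K 3), IsFq2Conic D → C ⊆ D → P ∈ D ∩ linf K) := by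
  exact statement_3_general (by rw [Cardinal.mk_fintype, hq]; exact_mod_cast hq4) B hB T hT C hC
    hCB hTC

end BaerConics
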